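/- arXiv:1911.06225 — 2 statements merged into one kernel-verified Lean document; each statement's English description precedes it below -/
import Mathlib

section
/- Let F be the distribution function of a probability measure on ℝ satisfying Condition A. Then L(F) = sup_{θ ∈ ℝ, ψ ∈ SC₀} Ψ(θ, ψ, F) is finite, and the supremum is attained: there exist θ*(F) ∈ ℝ and ψ*(F) ∈ SC₀ with Ψ(θ*(F), ψ*(F), F) = L(F). -/
open MeasureTheory Filter Set
open scoped ENNReal NNReal

noncomputable section

/-- `exp` of an extended real number, valued in `ℝ≥0∞`. -/
def expE (y : EReal) : ℝ≥0∞ :=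
  if y = ⊥ then 0 else if y = ⊤ then ⊤ else ENNReal.ofReal (Real.exp y.toReal)

/-- Truncation of an extended real number to `ℝ≥0∞` (negative values go to `0`). -/
def toENN (y : EReal) : ℝ≥0∞ :=
  if y = ⊤ then ⊤ else ENNReal.ofReal y.toReal

/-- Signed (upper-minus-lower) integral of an `EReal`-valued function against a measure. -/
def eIntegral (μ : Measure ℝ) (ψ : ℝ → EReal) : EReal :=
  ((∫⁻ x, toENN (ψ x) ∂μ : ℝ≥0∞) : EReal) - ((∫⁻ x, toENN (-(ψ x)) ∂μ : ℝ≥0∞) : EReal)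

/-- Concavity for `EReal`-valued functions on `ℝ`. -/
def EConcave (ψ : ℝ → EReal) : Prop :=
  ∀ x y : ℝ, ∀ t : ℝ, 0 ≤ t → t ≤ 1 →
    ((t : EReal) * ψ x + (((1 - t) : ℝ) : EReal) * ψ y) ≤ ψ (t * x + (1 - t) * y)

/-- The class `SC₀` of proper, closed (upper semicontinuous), concave functions
`ℝ → [−∞, ∞)` that are symmetric about `0`. -/
def memSC0 (ψ : ℝ → EReal) : Prop :=
  (∀ x, ψ x < ⊤) ∧ (∃ x, ψ x ≠ ⊥) ∧ UpperSemicontinuous ψ ∧ EConcave ψ ∧ ∀ x, ψ (-x) = ψ x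

/-- The criterion function `Ψ(θ, ψ, F) = ∫ ψ(x − θ) dμ(x) − ∫ e^{ψ(x)} dx`. -/
def Psi (θ : ℝ) (ψ : ℝ → EReal) (μ : Measure ℝ) : EReal :=
  eIntegral μ (fun x => ψ (x - θ)) - ((∫⁻ x, expE (ψ x) : ℝ≥0∞) : EReal)

/-- `L(θ; F) = sup_{ψ ∈ SC₀} Ψ(θ, ψ, F)`. -/
def Ltheta (θ : ℝ) (μ : Measure ℝ) : EReal :=
  ⨆ ψ ∈ {ψ : ℝ → EReal | memSC0 ψ}, Psi θ ψ μ

/-- `L(F) = sup_{θ ∈ ℝ, ψ ∈ SC₀} Ψ(θ, ψ, F)`. -/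
def Lsup (μ : Measure ℝ) : EReal := ⨆ θ : ℝ, Ltheta θ μ

/-- Condition A: `μ` is a probability measure that is not a point mass,
with a finite first absolute moment. -/
def CondA (μ : Measure ℝ) : Prop :=
  IsProbabilityMeasure μ ∧ (∀ x : ℝ, μ ≠ Measure.dirac x) ∧
    (∫⁻ x, ENNReal.ofReal |x| ∂μ) < ⊤

/-- The empirical measure of the data `X₁, …, Xₙ`. -/
def empMeas {n : ℕ} (X : Fin n → ℝ) : Measure ℝ :=
  ((n : ℝ≥0∞))⁻¹ • ∑ i : Fin n, Measure.dirac (X i)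

/-- The empirical measure of the first `n` entries of a sequence. -/
def empSeq (X : ℕ → ℝ) (n : ℕ) : Measure ℝ :=
  ((n : ℝ≥0∞))⁻¹ • ∑ i ∈ Finset.range n, Measure.dirac (X i)

/-- The density `e^ψ` as a real-valued function. -/
def gReal (ψ : ℝ → EReal) (x : ℝ) : ℝ := (expE (ψ x)).toReal

/-- A knot of a concave function `ψ`: a point where the left and right derivatives
differ, or a boundary point of `dom ψ = {ψ > −∞}`. -/
def IsKnot (ψ : ℝ → EReal) (x : ℝ) : Prop :=
  x ∈ frontier {y : ℝ | ψ y ≠ ⊥} ∨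
    derivWithin (fun y => (ψ y).toReal) (Set.Iio x) x ≠
      derivWithin (fun y => (ψ y).toReal) (Set.Ioi x) x

/-- The class `𝒞` of proper closed concave functions `ℝ → [−∞, ∞)`. -/
def memC (φ : ℝ → EReal) : Prop :=
  (∀ x, φ x < ⊤) ∧ (∃ x, φ x ≠ ⊥) ∧ UpperSemicontinuous φ ∧ EConcave φ

/-- The criterion function `ω(φ, F) = ∫ φ dμ − ∫ e^{φ(x)} dx`. -/
def omegaF (φ : ℝ → EReal) (μ : Measure ℝ) : EReal :=
  eIntegral μ φ - ((∫⁻ x, expE (φ x) : ℝ≥0∞) : EReal)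

/-- `(θ, ψ)` maximizes `Ψ(·, ·, μ)` over `ℝ × SC₀`. -/
def IsMaximizer (θ : ℝ) (ψ : ℝ → EReal) (μ : Measure ℝ) : Prop :=
  memSC0 ψ ∧ ∀ (θ' : ℝ) (ψ' : ℝ → EReal), memSC0 ψ' → Psi θ' ψ' μ ≤ Psi θ ψ μ

/-- Condition B: the `θ`-component of a maximizer of `Ψ(·, ·, μ)` is unique. -/
def CondB (μ : Measure ℝ) : Prop :=
  ∀ (θ₁ θ₂ : ℝ) (ψ₁ ψ₂ : ℝ → EReal),
    IsMaximizer θ₁ ψ₁ μ → IsMaximizer θ₂ ψ₂ μ → θ₁ = θ₂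

/-- `J(F) = {x : 0 < F(x) < 1}`. -/
def Jset (μ : Measure ℝ) : Set ℝ := {x : ℝ | 0 < μ (Set.Iic x) ∧ μ (Set.Iic x) < 1}

/-- The Hellinger distance between two densities. -/
def Hdist (f g : ℝ → ℝ) : ℝ :=
  Real.sqrt ((1 / 2) * ∫ x, (Real.sqrt (f x) - Real.sqrt (g x)) ^ 2)

/-- Finite Fisher information for location: `g` is a.e. differentiable with
square-integrable score. -/
def FiniteFisher (g : ℝ → ℝ) : Prop :=
  ∃ D : ℝ → ℝ, (∀ᵐ x : ℝ, HasDerivAt g (D x) x) ∧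
    (∫⁻ x, ENNReal.ofReal ((D x) ^ 2 / g x)) < ⊤

/-- The symmetrization `μ^{sym}_θ = (μ + R_θ#μ)/2` of a measure about `θ`. -/
def symMeas (θ : ℝ) (μ : Measure ℝ) : Measure ℝ :=
  ((2 : ℝ≥0∞))⁻¹ • (μ + Measure.map (fun x => 2 * θ - x) μ)

end

/-!
If `A` is an upper bound of `ψ`, then `Ψ(θ, ψ, F) = A - D`, where the deficit
`D = ∫ (A - ψ(x - θ)) dF(x) + ∫ exp ψ` is a sum of integrals of nonnegative functions. A lower bound
on `Ψ` thus bounds both integrals. As `F` is not a point mass, it puts a fixed mass at distance at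
least `δ` from every `θ`; the first integral then prevents `ψ(δ)` from being far below `ψ(0)`, and
by concavity `exp ψ` is of order `exp ψ(0)` on an interval whose length decays only like `1 / ψ(0)`,
so the second integral bounds `ψ(0)`. Similarly, when `θ` is far from the bulk of `F`, `ψ` has to
stay bounded below on a long interval, so `θ` ranges over a compact set. Along a maximizing sequence
one may therefore assume that `θ` converges and that `ψ` hypo-converges; the hypo-limit is again in
`SC₀`, and the deficit is lower semicontinuous by Fatou's lemma. Finally, a finite first moment
makes `Ψ(0, -|x|, F)` finite, so the supremum is not `-∞`.
-/

section HypoLimit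

open scoped Topology

variable {X β : Type*} [TopologicalSpace X] [CompleteLinearOrder β]
  {f : ℕ → X → β} {g : X → β} {x z : X} {a : β}

/-- `g` is the hypo-limit (the `Γ`-limit, with maximization in place of minimization) of the
sequence `f`: the hypographs of `f n` converge to that of `g` in the sense of Kuratowski. -/
structure IsHypoLimit (f : ℕ → X → β) (g : X → β) : Prop where
  eventually_lt : ∀ ⦃x c⦄, g x < c → ∀ᶠ p : ℕ × X in atTop ×ˢ 𝓝 x, f p.1 p.2 < c
  eventually_exists_gt : ∀ ⦃x c⦄, c < g x → ∀ U ∈ 𝓝 x, ∀ᶠ n in atTop, ∃ y ∈ U, c < f n y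

namespace IsHypoLimit

theorem limsup_le [DenselyOrdered β] (h : IsHypoLimit f g) {u : ℕ → X}
    (hu : Tendsto u atTop (𝓝 x)) : limsup (fun n => f n (u n)) atTop ≤ g x :=
  le_of_forall_gt_imp_ge_of_dense fun _ hc =>
    limsup_le_of_le (by isBoundedDefault) <|
      ((tendsto_id.prodMk hu).eventually (h.eventually_lt hc)).mono fun _ => le_of_lt

theorem le_liminf_of_eventually_le [DenselyOrdered β] (h : IsHypoLimit f g)
    (hle : ∀ᶠ y in 𝓝 z, ∀ n, f n y ≤ f n x) : g z ≤ liminf (fun n => f n x) atTop :=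
  le_of_forall_lt_imp_le_of_dense fun _ hc =>
    le_liminf_of_le (by isBoundedDefault) <|
      (h.eventually_exists_gt hc _ hle).mono fun n ⟨_, hy, hcy⟩ => (hcy.trans_le (hy n)).le

theorem apply_le (h : IsHypoLimit f g) (hf : ∀ n y, f n y ≤ a) : g x ≤ a :=
  le_of_not_gt fun ha =>
    let ⟨n, y, _, hy⟩ := (h.eventually_exists_gt ha univ univ_mem).exists
    hy.not_ge (hf n y)

theorem le_apply (h : IsHypoLimit f g) (hf : ∀ n, a ≤ f n x) : a ≤ g x :=
  le_of_not_gt fun ha =>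
    let ⟨n, hn⟩ := ((tendsto_id.prodMk tendsto_const_nhds).eventually (h.eventually_lt ha)).exists
    hn.not_ge (hf n)

theorem le_comp [DenselyOrdered β] (h : IsHypoLimit f g) {φ : X → X} (hφ : ContinuousAt φ x)
    (hf : ∀ n y, f n y ≤ f n (φ y)) : g x ≤ g (φ x) := by
  refine le_of_forall_gt_imp_ge_of_dense fun c hc => le_of_not_gt fun hcx => ?_
  obtain ⟨p, hp, q, hq, hpq⟩ := eventually_prod_iff.1 (h.eventually_lt hc)
  obtain ⟨n, hn, y, hy, hcy⟩ := (hp.and (h.eventually_exists_gt hcx _ (hφ hq))).exists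
  exact ((hf n y).trans_lt (hpq hn hy)).not_gt hcy

theorem upperSemicontinuous [DenselyOrdered β] (h : IsHypoLimit f g) :
    UpperSemicontinuous g := by
  intro x c hc
  obtain ⟨d, hxd, hdc⟩ := exists_between hc
  obtain ⟨p, hp, q, hq, hpq⟩ := eventually_prod_iff.1 (h.eventually_lt hxd)
  filter_upwards [eventually_eventually_nhds.2 hq] with y hy
  refine lt_of_le_of_lt (le_of_not_gt fun hdy => ?_) hdc
  obtain ⟨n, hn, w, hw, hdw⟩ := (hp.and (h.eventually_exists_gt hdy _ hy)).exists
  exact (hpq hn hw).not_gt hdw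

end IsHypoLimit

/-- Along a subsequence, the suprema over each set of a countable basis converge. -/
theorem exists_subseq_isHypoLimit [SecondCountableTopology X] [TopologicalSpace β]
    [OrderTopology β] [FirstCountableTopology β] (f : ℕ → X → β) :
    ∃ φ : ℕ → ℕ, StrictMono φ ∧ ∃ g, IsHypoLimit (fun n => f (φ n)) g := by
  let B := TopologicalSpace.countableBasis X
  have hB : TopologicalSpace.IsTopologicalBasis B := TopologicalSpace.isBasis_countableBasis X
  obtain ⟨s, φ, hφ, hs⟩ := CompactSpace.tendsto_subseq fun n (U : B) => ⨆ y ∈ U.1, f n y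
  have hsU (U : B) : Tendsto (fun n => ⨆ y ∈ U.1, f (φ n) y) atTop (𝓝 (s U)) :=
    tendsto_pi_nhds.1 hs U
  refine ⟨φ, hφ, fun x => ⨅ (U : B) (_ : x ∈ U.1), s U, ⟨fun x c hc => ?_, fun x c hc V hV => ?_⟩⟩
  · obtain ⟨U, hxU, hUc⟩ := by simpa only [iInf_lt_iff] using hc
    refine eventually_prod_iff.2 ⟨_, (hsU U).eventually (gt_mem_nhds hUc), _,
      hB.mem_nhds U.2 hxU, fun hn y hy => (le_iSup₂ y hy).trans_lt hn⟩
  · obtain ⟨U, hUB, hxU, hUV⟩ := hB.mem_nhds_iff.1 hV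
    have hcU : c < s ⟨U, hUB⟩ := hc.trans_le (iInf₂_le (⟨U, hUB⟩ : B) hxU)
    filter_upwards [(hsU ⟨U, hUB⟩).eventually (lt_mem_nhds hcU)] with n hn
    obtain ⟨y, hyU, hy⟩ := by simpa only [lt_iSup_iff] using hn
    exact ⟨y, hUV hyU, hy⟩

end HypoLimit

section SC0

open scoped Topology

theorem EConcave.apply_le_of_abs_le {ψ : ℝ → EReal} (hψ : EConcave ψ) (heven : ∀ x, ψ (-x) = ψ x)
    {x y : ℝ} (hxy : |x| ≤ |y|) : ψ y ≤ ψ x := by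
  rcases eq_or_ne y 0 with rfl | hy
  · rw [abs_zero, abs_nonpos_iff] at hxy
    rw [hxy]
  obtain ⟨hlower, hupper⟩ : -1 ≤ x / y ∧ x / y ≤ 1 := by
    rw [← abs_le, abs_div]
    exact div_le_one_of_le₀ hxy (abs_nonneg y)
  set t := (1 + x / y) / 2 with ht
  have ht0 : 0 ≤ t := by linarith
  have ht1 : t ≤ 1 := by linarith
  calc ψ y = t * ψ y + ((1 - t : ℝ) : EReal) * ψ (-y) := by
        rw [heven, ← EReal.right_distrib_of_nonneg (by exact_mod_cast ht0)
          (by exact_mod_cast sub_nonneg.2 ht1), ← EReal.coe_add, add_sub_cancel, EReal.coe_one,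
          one_mul]
    _ ≤ ψ (t * y + (1 - t) * -y) := hψ y (-y) t ht0 ht1
    _ = ψ x := by
        congr 1
        rw [ht]
        field_simp
        ring

theorem EConcave.coe_le_apply {ψ : ℝ → EReal} (hψ : EConcave ψ) {x y t a b : ℝ} (ha : a ≤ ψ x)
    (hb : b ≤ ψ y) (ht0 : 0 ≤ t) (ht1 : t ≤ 1) :
    ((t * a + (1 - t) * b : ℝ) : EReal) ≤ ψ (t * x + (1 - t) * y) := by
  refine le_trans ?_ (hψ x y t ht0 ht1)
  rw [EReal.coe_add, EReal.coe_mul, EReal.coe_mul]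
  exact add_le_add (mul_le_mul_of_nonneg_left ha (EReal.coe_nonneg.2 ht0))
    (mul_le_mul_of_nonneg_left hb (EReal.coe_nonneg.2 (sub_nonneg.2 ht1)))

theorem IsHypoLimit.eConcave {f : ℕ → ℝ → EReal} {g : ℝ → EReal} (h : IsHypoLimit f g)
    (hf : ∀ n, EConcave (f n)) : EConcave g := by
  intro x y t ht0 ht1
  rcases ht0.eq_or_lt with rfl | ht0
  · simp
  rcases ht1.eq_or_lt with rfl | ht1
  · simp
  have ht : (0 : EReal) < t := by exact_mod_cast ht0
  have ht' : (0 : EReal) < (1 - t : ℝ) := by exact_mod_cast sub_pos.2 ht1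
  refine EReal.add_le_of_forall_lt fun p hp q hq => le_of_not_gt fun hpq => ?_
  rw [mul_comm, ← EReal.div_lt_iff ht (EReal.coe_ne_top t)] at hp
  rw [mul_comm, ← EReal.div_lt_iff ht' (EReal.coe_ne_top _)] at hq
  obtain ⟨N, hN, W, hW, hNW⟩ := eventually_prod_iff.1 (h.eventually_lt hpq)
  have hcomb : Tendsto (fun w : ℝ × ℝ => t * w.1 + (1 - t) * w.2) (𝓝 x ×ˢ 𝓝 y)
      (𝓝 (t * x + (1 - t) * y)) := by
    rw [← nhds_prod_eq]
    exact Continuous.tendsto (by fun_prop) (x, y)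
  obtain ⟨U, hU, V, hV, hUV⟩ := eventually_prod_iff.1 (hcomb.eventually hW)
  obtain ⟨n, hn, ⟨u, hu, hpu⟩, v, hv, hqv⟩ :=
    (hN.and ((h.eventually_exists_gt hp _ hU).and (h.eventually_exists_gt hq _ hV))).exists
  rw [EReal.div_lt_iff ht (EReal.coe_ne_top t), mul_comm] at hpu
  rw [EReal.div_lt_iff ht' (EReal.coe_ne_top _), mul_comm] at hqv
  exact (hNW hn (hUV hu hv)).not_ge
    ((add_le_add hpu.le hqv.le).trans (hf n u v t ht0.le ht1.le))

/-- The exceptional points are the jumps of the monotone function `r ↦ g r`, `0 ≤ r`, of which there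
are only countably many. -/
theorem IsHypoLimit.ae_le_liminf {f : ℕ → ℝ → EReal} {g : ℝ → EReal} (h : IsHypoLimit f g)
    (hf : ∀ n ⦃x y : ℝ⦄, |x| ≤ |y| → f n y ≤ f n x)
    (hg : ∀ ⦃x y : ℝ⦄, |x| ≤ |y| → g y ≤ g x) :
    ∀ᵐ x : ℝ, g x ≤ liminf (fun n => f n x) atTop := by
  have hanti : Antitone fun r : ℝ => g (max r 0) := fun r s hrs => hg <| by
    rw [abs_of_nonneg (le_max_right _ _), abs_of_nonneg (le_max_right _ _)]
    exact max_le_max_right 0 hrs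
  have hcount := hanti.countable_not_continuousAt
  filter_upwards [hcount.ae_notMem volume, (hcount.preimage neg_injective).ae_notMem volume]
    with x hx hx'
  have hcont : ContinuousAt (fun r : ℝ => g (max r 0)) |x| := by
    rcases abs_choice x with habs | habs <;> rw [habs]
    exacts [not_not.1 hx, not_not.1 hx']
  refine le_of_forall_lt fun c hc => ?_
  have hcabs : c < g (max |x| 0) := hc.trans_le (hg (by simp))
  obtain ⟨r, hcr, hxr⟩ := (((hcont.eventually (lt_mem_nhds hcabs)).filter_mono
    nhdsWithin_le_nhds).and self_mem_nhdsWithin : ∀ᶠ r in 𝓝[>] |x|, _).exists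
  have hr : |r| = r := abs_of_pos ((abs_nonneg x).trans_lt hxr)
  rw [max_eq_left (hr ▸ abs_nonneg r)] at hcr
  refine hcr.trans_le (h.le_liminf_of_eventually_le ?_)
  have hnear : ∀ᶠ y in 𝓝 r, |x| < |y| :=
    continuous_abs.continuousAt.eventually (lt_mem_nhds (by rwa [hr]))
  exact hnear.mono fun y hy n => hf n hy.le

namespace memSC0

variable {ψ : ℝ → EReal} {x y : ℝ}

theorem apply_le_of_abs_le (hψ : memSC0 ψ) (hxy : |x| ≤ |y|) : ψ y ≤ ψ x :=
  hψ.2.2.2.1.apply_le_of_abs_le hψ.2.2.2.2 hxy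

theorem apply_le_apply_zero (hψ : memSC0 ψ) (x : ℝ) : ψ x ≤ ψ 0 :=
  hψ.apply_le_of_abs_le (by simp)

theorem measurable (hψ : memSC0 ψ) : Measurable ψ := hψ.2.2.1.measurable

theorem coe_toReal_apply_zero (hψ : memSC0 ψ) : ((ψ 0).toReal : EReal) = ψ 0 := by
  obtain ⟨x, hx⟩ := hψ.2.1
  exact EReal.coe_toReal (hψ.1 0).ne (ne_bot_of_le_ne_bot hx (hψ.apply_le_apply_zero x))

theorem of_isHypoLimit {f : ℕ → ℝ → EReal} {A c : ℝ} (hf : ∀ n, memSC0 (f n))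
    (h : IsHypoLimit f ψ) (hA : ∀ n, f n 0 ≤ A) (hc : ∀ n, c ≤ f n 0) : memSC0 ψ := by
  have hneg (x : ℝ) : ψ x ≤ ψ (-x) :=
    h.le_comp continuous_neg.continuousAt fun n y => ((hf n).2.2.2.2 y).ge
  refine ⟨fun x => ?_, ⟨0, ?_⟩, h.upperSemicontinuous, h.eConcave fun n => (hf n).2.2.2.1,
    fun x => le_antisymm ?_ (hneg x)⟩
  · exact (h.apply_le fun n y => ((hf n).apply_le_apply_zero y).trans (hA n)).trans_lt
      (EReal.coe_lt_top A)
  · exact ne_bot_of_le_ne_bot (EReal.coe_ne_bot c) (h.le_apply hc)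
  · simpa only [neg_neg] using hneg (-x)

end memSC0

theorem memSC0_neg_abs : memSC0 fun x => ((-|x| : ℝ) : EReal) := by
  refine ⟨fun x => EReal.coe_lt_top _, ⟨0, EReal.coe_ne_bot _⟩, ?_, fun x y t ht0 ht1 => ?_,
    fun x => by simp only [abs_neg]⟩
  · exact (continuous_coe_real_ereal.comp (by fun_prop)).upperSemicontinuous
  · have htri := abs_add_le (t * x) ((1 - t) * y)
    rw [abs_mul, abs_mul, abs_of_nonneg ht0, abs_of_nonneg (sub_nonneg.2 ht1)] at htri
    beta_reduce
    exact_mod_cast (by linarith : t * -|x| + (1 - t) * -|y| ≤ -|t * x + (1 - t) * y|)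

end SC0

section Deficit

variable {A b c p r θ : ℝ} {ψ : ℝ → EReal} {μ : Measure ℝ}

theorem expE_eq_exp (y : EReal) : expE y = y.exp := by
  induction y <;> simp [expE]

theorem toENN_eq_toENNReal (y : EReal) : toENN y = y.toENNReal := rfl

theorem antitone_toENNReal_coe_sub (A : ℝ) :
    Antitone fun y : EReal => ((A : EReal) - y).toENNReal := fun _ _ h =>
  EReal.toENNReal_le_toENNReal (EReal.sub_le_sub le_rfl h)

/-- The identity `A - y = (A⁺ - A⁻) - (y⁺ - y⁻)`, rearranged so that no subtraction occurs in
`ℝ≥0∞`. -/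
theorem toENNReal_add_toENNReal_coe_sub {y : EReal} (hy : y ≤ A) :
    y.toENNReal + ((A : EReal) - y).toENNReal + ENNReal.ofReal (-A) =
      ENNReal.ofReal A + (-y).toENNReal := by
  induction y with
  | bot => simp
  | top => exact absurd hy (EReal.coe_lt_top A).not_ge
  | coe a =>
    rw [← EReal.coe_sub, ← EReal.coe_neg]
    simp only [EReal.real_coe_toENNReal, ENNReal.ofReal]
    norm_cast
    rw [← NNReal.coe_inj]
    push_cast [Real.coe_toNNReal']
    rw [max_eq_left (sub_nonneg.2 (EReal.coe_le_coe_iff.1 hy))]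
    linarith [max_zero_sub_max_neg_zero_eq_self a, max_zero_sub_max_neg_zero_eq_self A]

theorem coe_sub_coe_eq_sub_coe_of_add_eq {P Q N : ℝ≥0∞} (hP : P ≠ ⊤)
    (h : P + Q + ENNReal.ofReal (-A) = ENNReal.ofReal A + N) :
    (P : EReal) - N = A - Q := by
  lift P to ℝ≥0 using hP
  have htop : Q = ⊤ ↔ N = ⊤ := by simpa using congrArg (· = ⊤) h
  induction N with
  | top =>
    rw [htop.2 rfl]
    simp
  | coe N =>
    lift Q to ℝ≥0 using htop.not.2 ENNReal.coe_ne_top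
    simp only [ENNReal.ofReal] at h
    norm_cast at h
    have h' := congrArg NNReal.toReal h
    push_cast [Real.coe_toNNReal'] at h'
    simp only [EReal.coe_nnreal_eq_coe_real]
    norm_cast
    linarith [max_zero_sub_max_neg_zero_eq_self A]

theorem eIntegral_eq_sub_lintegral [IsProbabilityMeasure μ] {f : ℝ → EReal} (hf : Measurable f)
    (hA : ∀ x, f x ≤ A) :
    eIntegral μ f = A - (∫⁻ x, ((A : EReal) - f x).toENNReal ∂μ : ℝ≥0∞) := by
  simp only [eIntegral, toENN_eq_toENNReal]
  have hfin : ∫⁻ x, (f x).toENNReal ∂μ ≠ ⊤ := ne_top_of_le_ne_top ENNReal.ofReal_ne_top <|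
    calc ∫⁻ x, (f x).toENNReal ∂μ ≤ ∫⁻ _, ENNReal.ofReal A ∂μ :=
          lintegral_mono fun x => EReal.toENNReal_le_toENNReal (hA x)
      _ = ENNReal.ofReal A := by simp
  refine coe_sub_coe_eq_sub_coe_of_add_eq hfin ?_
  calc _ = ∫⁻ x, ((f x).toENNReal + ((A : EReal) - f x).toENNReal + ENNReal.ofReal (-A)) ∂μ := by
        rw [lintegral_add_right _ measurable_const, lintegral_add_left hf.ereal_toENNReal]
        simp
    _ = ∫⁻ x, (ENNReal.ofReal A + (-f x).toENNReal) ∂μ :=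
        lintegral_congr fun x => toENNReal_add_toENNReal_coe_sub (hA x)
    _ = _ := by
        rw [lintegral_add_left measurable_const]
        simp only [lintegral_const, measure_univ, mul_one]

/-- The nonnegative functional by which the criterion `Psi θ ψ μ` falls short of an upper bound `A`
of `ψ`, see `Psi_eq_sub_deficit`. -/
noncomputable def deficit (A θ : ℝ) (ψ : ℝ → EReal) (μ : Measure ℝ) : ℝ≥0∞ :=
  ∫⁻ x, ((A : EReal) - ψ (x - θ)).toENNReal ∂μ + ∫⁻ x, (ψ x).exp

theorem Psi_eq_sub_deficit [IsProbabilityMeasure μ] (hψ : memSC0 ψ) (hA : ψ 0 ≤ A) :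
    Psi θ ψ μ = A - (deficit A θ ψ μ : EReal) := by
  rw [Psi, eIntegral_eq_sub_lintegral (f := fun x => ψ (x - θ))
    (hψ.measurable.comp (measurable_id.sub_const θ))
    fun x => (hψ.apply_le_apply_zero (x - θ)).trans hA]
  simp only [expE_eq_exp]
  rw [deficit, EReal.coe_ennreal_add, sub_eq_add_neg, sub_eq_add_neg, sub_eq_add_neg,
    EReal.neg_add (by simp) (by simp), sub_eq_add_neg, add_assoc]

theorem Psi_le_apply_zero [IsProbabilityMeasure μ] (hψ : memSC0 ψ) : Psi θ ψ μ ≤ ψ 0 := by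
  rw [Psi_eq_sub_deficit hψ hψ.coe_toReal_apply_zero.ge, hψ.coe_toReal_apply_zero]
  simpa using EReal.sub_le_sub le_rfl (EReal.coe_ennreal_nonneg _)

theorem le_of_le_Psi [IsProbabilityMeasure μ] (hψ : memSC0 ψ) (hA : ψ 0 ≤ A)
    (hc : c ≤ Psi θ ψ μ) : c ≤ A :=
  EReal.coe_le_coe_iff.1 (hc.trans ((Psi_le_apply_zero hψ).trans hA))

theorem deficit_le_of_le_Psi [IsProbabilityMeasure μ] (hψ : memSC0 ψ) (hA : ψ 0 ≤ A)
    (hc : c ≤ Psi θ ψ μ) : deficit A θ ψ μ ≤ ENNReal.ofReal (A - c) := by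
  rw [Psi_eq_sub_deficit hψ hA] at hc
  rw [← EReal.coe_ennreal_le_coe_ennreal_iff, EReal.coe_ennreal_ofReal]
  refine le_trans ?_ (EReal.coe_le_coe_iff.2 (le_max_left _ _))
  rw [EReal.coe_sub]
  rw [EReal.le_sub_iff_add_le (.inl (EReal.coe_ne_bot c)) (.inl (EReal.coe_ne_top c)), add_comm]
  exact EReal.add_le_of_le_sub hc

theorem memSC0.measurable_toENNReal_coe_sub (hψ : memSC0 ψ) (A θ : ℝ) :
    Measurable fun x => ((A : EReal) - ψ (x - θ)).toENNReal :=
  (antitone_toENNReal_coe_sub A).measurable.comp (hψ.measurable.comp (measurable_id.sub_const θ))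

theorem le_apply_of_le_Psi [IsProbabilityMeasure μ] (hψ : memSC0 ψ) (hA : ψ 0 ≤ A)
    (hc : c ≤ Psi θ ψ μ) (hr : 0 ≤ r) (hp : 0 < p)
    (hμ : ENNReal.ofReal p ≤ μ {x | r ≤ dist x θ}) :
    ((A - (A - c) / p : ℝ) : EReal) ≤ ψ r := by
  have hcA : c ≤ A := le_of_le_Psi hψ hA hc
  have hsub : {x | r ≤ dist x θ} ⊆
      {x | ((A : EReal) - ψ r).toENNReal ≤ ((A : EReal) - ψ (x - θ)).toENNReal} := fun x hx =>
    antitone_toENNReal_coe_sub A <| hψ.apply_le_of_abs_le <| by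
      rwa [abs_of_nonneg hr]
  have hmarkov : ((A : EReal) - ψ r).toENNReal * ENNReal.ofReal p ≤ ENNReal.ofReal (A - c) :=
    calc _ ≤ ((A : EReal) - ψ r).toENNReal *
          μ {x | ((A : EReal) - ψ r).toENNReal ≤ ((A : EReal) - ψ (x - θ)).toENNReal} := by
          gcongr
          exact hμ.trans (measure_mono hsub)
      _ ≤ ∫⁻ x, ((A : EReal) - ψ (x - θ)).toENNReal ∂μ := 
          mul_meas_ge_le_lintegral (hψ.measurable_toENNReal_coe_sub A θ) _
      _ ≤ deficit A θ ψ μ := le_self_add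
      _ ≤ ENNReal.ofReal (A - c) := deficit_le_of_le_Psi hψ hA hc
  have hdiv : (A : EReal) - ψ r ≤ ((A - c) / p : ℝ) := by
    refine ((le_max_right 0 _).trans_eq EReal.coe_toENNReal_eq_max.symm).trans ?_
    rw [← max_eq_left (div_nonneg (sub_nonneg.2 hcA) hp.le), ← EReal.coe_ennreal_ofReal,
      EReal.coe_ennreal_le_coe_ennreal_iff, ENNReal.ofReal_div_of_pos hp]
    exact (ENNReal.le_div_iff_mul_le (by simp [hp]) (by simp)).2 hmarkov
  rw [EReal.coe_sub]
  exact EReal.sub_le_of_le_add' <|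
    (EReal.sub_le_iff_le_add (.inr (EReal.coe_ne_top _)) (.inr (EReal.coe_ne_bot _))).1 hdiv

theorem two_mul_mul_exp_le_of_le_Psi [IsProbabilityMeasure μ] (hψ : memSC0 ψ) (hA : ψ 0 ≤ A)
    (hc : c ≤ Psi θ ψ μ) (hr : 0 ≤ r) (hb : b ≤ ψ r) : 2 * r * Real.exp b ≤ A - c := by
  have hcA : c ≤ A := le_of_le_Psi hψ hA hc
  rw [← ENNReal.ofReal_le_ofReal_iff (sub_nonneg.2 hcA)]
  calc ENNReal.ofReal (2 * r * Real.exp b)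
      = ∫⁻ _ in Icc (-r) r, ENNReal.ofReal (Real.exp b) := by
        rw [setLIntegral_const, Real.volume_Icc, ← ENNReal.ofReal_mul (Real.exp_nonneg b)]
        ring_nf
    _ ≤ ∫⁻ x in Icc (-r) r, (ψ x).exp := by
        refine setLIntegral_mono' measurableSet_Icc fun x hx => ?_
        rw [← EReal.exp_coe]
        refine EReal.exp_monotone (hb.trans (hψ.apply_le_of_abs_le ?_))
        rw [abs_of_nonneg hr]
        exact abs_le.2 hx
    _ ≤ ∫⁻ x, (ψ x).exp := setLIntegral_le_lintegral _ _
    _ ≤ deficit A θ ψ μ := le_add_self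
    _ ≤ ENNReal.ofReal (A - c) := deficit_le_of_le_Psi hψ hA hc

end Deficit

section Nondegenerate

theorem nontrivial_support_of_forall_ne_dirac {X : Type*} [TopologicalSpace X]
    [HereditarilyLindelofSpace X] [MeasurableSpace X] (μ : Measure X) [IsProbabilityMeasure μ]
    (hμ : ∀ x, μ ≠ Measure.dirac x) : μ.support.Nontrivial := by
  by_contra hsub
  obtain ⟨a, ha⟩ := Measure.nonempty_support (NeZero.ne μ)
  have hae : ∀ᵐ x ∂μ, x = a := by
    filter_upwards [Measure.support_mem_ae] with x hx
    exact not_nontrivial_iff.1 hsub hx ha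
  exact hμ a <| by
    simpa using (ProbabilityTheory.hasLaw_dirac_of_ae_eq (X := id) hae).map_eq

/-- Two points of the support at distance `4 * δ` cannot both be closer than `2 * δ` to `θ`,
so the ball of radius `δ` around one of them stays `δ`-away from `θ`. -/
theorem exists_pos_forall_le_measure_le_dist {X : Type*} [MetricSpace X]
    [SecondCountableTopology X] [MeasurableSpace X] (μ : Measure X) [IsProbabilityMeasure μ]
    (hμ : ∀ x, μ ≠ Measure.dirac x) :
    ∃ δ > 0, ∃ ε : ℝ, 0 < ε ∧ ∀ θ, ENNReal.ofReal ε ≤ μ {x | δ ≤ dist x θ} := by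
  obtain ⟨a, ha, b, hb, hab⟩ := nontrivial_support_of_forall_ne_dirac μ hμ
  obtain ⟨δ, hδ, hδab⟩ : ∃ δ > 0, 4 * δ = dist a b :=
    ⟨dist a b / 4, div_pos (dist_pos.2 hab) four_pos, by ring⟩
  have hball (x : X) (hx : x ∈ μ.support) : 0 < μ.real (Metric.ball x δ) :=
    ENNReal.toReal_pos ((Measure.mem_support_iff_forall x).1 hx _ (Metric.ball_mem_nhds x hδ)).ne'
      (measure_ne_top _ _)
  refine ⟨δ, hδ, min (μ.real (Metric.ball a δ)) (μ.real (Metric.ball b δ)),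
    lt_min (hball a ha) (hball b hb), fun θ => ?_⟩
  have hfar {x y : X} (hx : 2 * δ ≤ dist x θ) (hy : y ∈ Metric.ball x δ) : δ ≤ dist y θ := by
    have htri := dist_triangle_left x θ y
    linarith [Metric.mem_ball.1 hy]
  have hball_le {x : X} (hx : 2 * δ ≤ dist x θ) :
      ENNReal.ofReal (μ.real (Metric.ball x δ)) ≤ μ {y | δ ≤ dist y θ} :=
    (ofReal_measureReal).trans_le (measure_mono fun _ => hfar hx)
  rcases le_total (2 * δ) (dist a θ) with ha' | ha'
  · exact (ENNReal.ofReal_le_ofReal (min_le_left _ _)).trans (hball_le ha')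
  · refine (ENNReal.ofReal_le_ofReal (min_le_right _ _)).trans (hball_le ?_)
    linarith [dist_triangle_right a b θ]

end Nondegenerate

section Coercivity

variable {c δ ε : ℝ} {μ : Measure ℝ} [IsProbabilityMeasure μ]

theorem two_mul_mul_exp_apply_zero_le {θ : ℝ} {ψ : ℝ → EReal} (hψ : memSC0 ψ)
    (hc : c ≤ Psi θ ψ μ) (hδ : 0 ≤ δ) (hε : 0 < ε)
    (hμ : ENNReal.ofReal ε ≤ μ {x | δ ≤ dist x θ}) :
    2 * δ * Real.exp ((ψ 0).toReal - 1) ≤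
      ((ψ 0).toReal - c) * (1 + ((ψ 0).toReal - c) / ε) := by
  set M := (ψ 0).toReal
  have hM : (M : EReal) = ψ 0 := hψ.coe_toReal_apply_zero
  set D := (M - c) / ε
  have hD : 0 ≤ D := div_nonneg (sub_nonneg.2 (le_of_le_Psi hψ hM.ge hc)) hε.le
  have hψδ : ((M - D : ℝ) : EReal) ≤ ψ δ := le_apply_of_le_Psi hψ hM.ge hc hδ hε hμ
  -- A concave function that drops by at most `D` on `[0, δ]` drops by at most `1` on `[0, t * δ]`.
  set t := 1 / (1 + D)
  have ht0 : 0 ≤ t := by positivity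
  have ht : t * (1 + D) = 1 := one_div_mul_cancel (by positivity)
  have ht1 : t ≤ 1 := by nlinarith
  have hψt : ((M - 1 : ℝ) : EReal) ≤ ψ (t * δ) := calc
    ((M - 1 : ℝ) : EReal) ≤ ((t * (M - D) + (1 - t) * M : ℝ) : EReal) := by
        exact_mod_cast (by nlinarith)
    _ ≤ ψ (t * δ + (1 - t) * 0) := hψ.2.2.2.1.coe_le_apply hψδ hM.le ht0 ht1
    _ = ψ (t * δ) := by rw [mul_zero, add_zero]
  calc 2 * δ * Real.exp (M - 1) = 2 * (t * δ) * Real.exp (M - 1) * (1 + D) := by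
        linear_combination -(2 * δ * Real.exp (M - 1)) * ht
    _ ≤ (M - c) * (1 + D) := by
        gcongr
        exact two_mul_mul_exp_le_of_le_Psi hψ hM.ge hc (mul_nonneg ht0 hδ) hψt

theorem exists_forall_le_of_mul_exp_le (c : ℝ) (hδ : 0 < δ) (ε : ℝ) :
    ∃ A, ∀ M, 2 * δ * Real.exp (M - 1) ≤ (M - c) * (1 + (M - c) / ε) → M ≤ A := by
  have hlim := Polynomial.tendsto_div_exp_atTop
    ((.X - .C c) * (1 + (.X - .C c) * .C ε⁻¹))
  obtain ⟨A, hA⟩ := eventually_atTop.1 <|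
    hlim.eventually (gt_mem_nhds (by positivity : 0 < 2 * δ * Real.exp (-1)))
  refine ⟨A, fun M hM => le_of_not_gt fun hAM => hM.not_gt ?_⟩
  have hexp := hA M hAM.le
  simp only [Polynomial.eval_mul, Polynomial.eval_add, Polynomial.eval_sub, Polynomial.eval_X,
    Polynomial.eval_C, Polynomial.eval_one] at hexp
  rw [div_lt_iff₀ (Real.exp_pos _), mul_assoc, ← Real.exp_add] at hexp
  rwa [div_eq_mul_inv, sub_eq_neg_add M 1]

theorem exists_forall_apply_zero_le (hμ : ∀ x, μ ≠ Measure.dirac x) (c : ℝ) :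
    ∃ A : ℝ, ∀ θ ψ, memSC0 ψ → c ≤ Psi θ ψ μ → ψ 0 ≤ A := by
  obtain ⟨δ, hδ, ε, hε, hδε⟩ := exists_pos_forall_le_measure_le_dist μ hμ
  obtain ⟨A, hA⟩ := exists_forall_le_of_mul_exp_le c hδ ε
  refine ⟨A, fun θ ψ hψ hc => ?_⟩
  rw [← hψ.coe_toReal_apply_zero]
  exact_mod_cast hA _ (two_mul_mul_exp_apply_zero_le hψ hc hδ.le hε (hδε θ))

variable (μ) in
theorem exists_isCompact_forall_mem_of_le_Psi (A c : ℝ) :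
    ∃ K : Set ℝ, IsCompact K ∧
      ∀ θ ψ, memSC0 ψ → ψ 0 ≤ A → c ≤ Psi θ ψ μ → θ ∈ K := by
  obtain ⟨a, ha⟩ := Measure.nonempty_support (NeZero.ne μ)
  set p := μ.real (Metric.ball a 1)
  have hp : 0 < p := ENNReal.toReal_pos
    ((Measure.mem_support_iff_forall a).1 ha _ (Metric.ball_mem_nhds a one_pos)).ne'
    (measure_ne_top _ _)
  set e := 2 * Real.exp (A - (A - c) / p)
  refine ⟨Metric.closedBall a ((A - c) / e + 1), isCompact_closedBall _ _,
    fun θ ψ hψ hA hc => ?_⟩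
  have hcA : 0 ≤ A - c := sub_nonneg.2 (le_of_le_Psi hψ hA hc)
  rw [Metric.mem_closedBall, ← sub_le_iff_le_add]
  rcases le_total (dist θ a - 1) 0 with hr | hr
  · exact hr.trans (by positivity)
  have hfar : ENNReal.ofReal p ≤ μ {x | dist θ a - 1 ≤ dist x θ} :=
    (ofReal_measureReal).trans_le <| measure_mono fun x hx => by
      have htri := dist_triangle_left θ a x
      rw [mem_ofPred]
      linarith [Metric.mem_ball.1 hx]
  rw [le_div_iff₀ (by positivity)]
  linarith [two_mul_mul_exp_le_of_le_Psi hψ hA hc hr (le_apply_of_le_Psi hψ hA hc hr hp hfar)]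

end Coercivity

section UpperSemicontinuity

open scoped Topology

theorem ennreal_le_liminf_add {ι : Type*} {l : Filter ι} (u v : ι → ℝ≥0∞) :
    liminf u l + liminf v l ≤ liminf (fun i => u i + v i) l := by
  rcases l.eq_or_neBot with rfl | hl
  · simp
  have hcoe (w : ι → ℝ≥0∞) :
      ((liminf w l : ℝ≥0∞) : EReal) = liminf (fun i => (w i : EReal)) l :=
    EReal.coe_ennreal_strictMono.monotone.map_liminf_of_continuousAt _
      continuous_coe_ennreal_ereal.continuousAt
  rw [← EReal.coe_ennreal_le_coe_ennreal_iff, EReal.coe_ennreal_add, hcoe, hcoe, hcoe]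
  simp only [EReal.coe_ennreal_add]
  exact EReal.le_liminf_add

variable {A θ : ℝ} {t : ℕ → ℝ} {f : ℕ → ℝ → EReal} {ψ : ℝ → EReal} {μ : Measure ℝ}

theorem continuousAt_coe_sub (A : ℝ) (y : EReal) :
    ContinuousAt (fun y : EReal => (A : EReal) - y) y :=
  ContinuousAt.comp (f := fun y : EReal => ((A : EReal), -y)) (g := fun p => p.1 + p.2)
    (EReal.continuousAt_add (by simp) (by simp))
    (continuousAt_const.prodMk continuous_neg.continuousAt)

namespace IsHypoLimit

theorem lintegral_toENNReal_sub_le_liminf (h : IsHypoLimit f ψ) (hf : ∀ n, memSC0 (f n))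
    (ht : Tendsto t atTop (𝓝 θ)) :
    ∫⁻ x, ((A : EReal) - ψ (x - θ)).toENNReal ∂μ ≤
      liminf (fun n => ∫⁻ x, ((A : EReal) - f n (x - t n)).toENNReal ∂μ) atTop := by
  refine (lintegral_mono fun x => ?_).trans
    (lintegral_liminf_le fun n => (hf n).measurable_toENNReal_coe_sub A (t n))
  calc ((A : EReal) - ψ (x - θ)).toENNReal
      ≤ ((A : EReal) - limsup (fun n => f n (x - t n)) atTop).toENNReal :=
        antitone_toENNReal_coe_sub A (h.limsup_le (tendsto_const_nhds.sub ht))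
    _ = liminf (fun n => ((A : EReal) - f n (x - t n)).toENNReal) atTop :=
        (antitone_toENNReal_coe_sub A).map_limsup_of_continuousAt _
          (EReal.continuous_toENNReal.continuousAt.comp (continuousAt_coe_sub A _))

theorem lintegral_exp_le_liminf (h : IsHypoLimit f ψ) (hf : ∀ n, memSC0 (f n)) (hψ : memSC0 ψ) :
    ∫⁻ x, (ψ x).exp ≤ liminf (fun n => ∫⁻ x, (f n x).exp) atTop := by
  refine (lintegral_mono_ae ?_).trans
    (lintegral_liminf_le fun n => EReal.measurable_exp.comp (hf n).measurable)
  filter_upwards [h.ae_le_liminf (fun n _ _ => (hf n).apply_le_of_abs_le)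
    fun _ _ => hψ.apply_le_of_abs_le] with x hx
  exact (EReal.exp_monotone hx).trans_eq
    (EReal.exp_monotone.map_liminf_of_continuousAt _ ENNReal.continuous_exp.continuousAt)

theorem deficit_le_liminf (h : IsHypoLimit f ψ) (hf : ∀ n, memSC0 (f n)) (hψ : memSC0 ψ)
    (ht : Tendsto t atTop (𝓝 θ)) :
    deficit A θ ψ μ ≤ liminf (fun n => deficit A (t n) (f n) μ) atTop :=
  (add_le_add (h.lintegral_toENNReal_sub_le_liminf hf ht)
    (h.lintegral_exp_le_liminf hf hψ)).trans (ennreal_le_liminf_add _ _)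

theorem limsup_Psi_le [IsProbabilityMeasure μ] (h : IsHypoLimit f ψ) (hf : ∀ n, memSC0 (f n))
    (hψ : memSC0 ψ) (hA : ∀ n, f n 0 ≤ A) (ht : Tendsto t atTop (𝓝 θ)) :
    limsup (fun n => Psi (t n) (f n) μ) atTop ≤ Psi θ ψ μ := by
  have hψA : ψ 0 ≤ A := h.apply_le fun n y => ((hf n).apply_le_apply_zero y).trans (hA n)
  have hanti : Antitone fun D : ℝ≥0∞ => (A : EReal) - D := fun _ _ hD =>
    EReal.sub_le_sub le_rfl (EReal.coe_ennreal_le_coe_ennreal_iff.2 hD)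
  have hcont : Continuous fun D : ℝ≥0∞ => (A : EReal) - D :=
    (continuous_iff_continuousAt.2 (continuousAt_coe_sub A)).comp continuous_coe_ennreal_ereal
  calc limsup (fun n => Psi (t n) (f n) μ) atTop
      = limsup (fun n => (A : EReal) - deficit A (t n) (f n) μ) atTop := by
        simp only [Psi_eq_sub_deficit (hf _) (hA _)]
    _ = A - (liminf (fun n => deficit A (t n) (f n) μ) atTop : ℝ≥0∞) :=
        (hanti.map_liminf_of_continuousAt _ hcont.continuousAt).symm
    _ ≤ A - (deficit A θ ψ μ : EReal) := hanti (h.deficit_le_liminf hf hψ ht)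
    _ = Psi θ ψ μ := (Psi_eq_sub_deficit hψ hψA).symm

end IsHypoLimit

end UpperSemicontinuity

section Supremum

open scoped Topology

variable {ψ : ℝ → EReal} {μ : Measure ℝ}

theorem Psi_le_Lsup (hψ : memSC0 ψ) (θ : ℝ) (μ : Measure ℝ) : Psi θ ψ μ ≤ Lsup μ :=
  (le_iSup₂ (f := fun ψ (_ : ψ ∈ {ψ | memSC0 ψ}) => Psi θ ψ μ) ψ hψ).trans
    (le_iSup (fun θ => Ltheta θ μ) θ)

theorem exists_lt_Psi_of_lt_Lsup {v : EReal} (hv : v < Lsup μ) :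
    ∃ θ ψ, memSC0 ψ ∧ v < Psi θ ψ μ := by
  simpa only [Lsup, Ltheta, lt_iSup_iff, mem_ofPred, exists_prop] using hv

theorem integrable_exp_neg_abs : Integrable fun x : ℝ => Real.exp (-|x|) := by
  rw [← integrableOn_univ, ← Iic_union_Ioi (a := (0 : ℝ))]
  refine IntegrableOn.union ?_ ?_
  · exact (integrableOn_exp_Iic 0).congr_fun
      (fun x hx => by simp [abs_of_nonpos (mem_Iic.1 hx)]) measurableSet_Iic
  · exact (integrableOn_exp_neg_Ioi 0).congr_fun
      (fun x hx => by simp [abs_of_pos (mem_Ioi.1 hx)]) measurableSet_Ioi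

theorem bot_lt_Lsup [IsProbabilityMeasure μ] (hμ : ∫⁻ x, ENNReal.ofReal |x| ∂μ < ⊤) :
    ⊥ < Lsup μ := by
  refine lt_of_lt_of_le ?_ (Psi_le_Lsup memSC0_neg_abs 0 μ)
  rw [Psi_eq_sub_deficit memSC0_neg_abs (A := 0) (by simp)]
  have hfin : deficit 0 0 (fun x => ((-|x| : ℝ) : EReal)) μ ≠ ⊤ := by
    refine ENNReal.add_ne_top.2 ⟨?_, ?_⟩
    · refine ne_of_eq_of_ne (lintegral_congr fun x => ?_) hμ.ne
      rw [sub_zero, ← EReal.coe_sub, sub_neg_eq_add, zero_add, EReal.real_coe_toENNReal]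
    · simp only [EReal.exp_coe]
      exact integrable_exp_neg_abs.lintegral_lt_top.ne
  lift deficit 0 0 (fun x => ((-|x| : ℝ) : EReal)) μ to ℝ≥0 using hfin with D
  exact EReal.bot_lt_coe (0 - D)

theorem exists_Psi_eq_Lsup [IsProbabilityMeasure μ] (hμ : ∀ x, μ ≠ Measure.dirac x)
    (hL : ⊥ < Lsup μ) : ∃ θ ψ, memSC0 ψ ∧ Psi θ ψ μ = Lsup μ := by
  obtain ⟨c, -, hcL⟩ := EReal.lt_iff_exists_real_btwn.1 hL
  obtain ⟨u, -, hu, hlim⟩ := exists_seq_strictMono_tendsto' hcL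
  choose t f hf hPsi using fun n => exists_lt_Psi_of_lt_Lsup (hu n).2
  have hc (n : ℕ) : c ≤ Psi (t n) (f n) μ := ((hu n).1.trans (hPsi n)).le
  obtain ⟨A, hA⟩ := exists_forall_apply_zero_le hμ c
  have hfA (n : ℕ) : f n 0 ≤ A := hA _ _ (hf n) (hc n)
  obtain ⟨K, hK, hmem⟩ := exists_isCompact_forall_mem_of_le_Psi μ A c
  obtain ⟨θ, -, φ, hφ, hθ⟩ := hK.tendsto_subseq fun n => hmem _ _ (hf n) (hfA n) (hc n)
  obtain ⟨φ', hφ', ψ, h⟩ := exists_subseq_isHypoLimit fun n => f (φ n)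
  have hψ : memSC0 ψ := .of_isHypoLimit (fun _ => hf _) h (fun _ => hfA _)
    fun _ => (hc _).trans (Psi_le_apply_zero (hf _))
  have hlim' : Tendsto (fun n => u (φ (φ' n))) atTop (𝓝 (Lsup μ)) :=
    hlim.comp (hφ.comp hφ').tendsto_atTop
  refine ⟨θ, ψ, hψ, (Psi_le_Lsup hψ θ μ).antisymm ?_⟩
  calc Lsup μ = limsup (fun n => u (φ (φ' n))) atTop := hlim'.limsup_eq.symm
    _ ≤ limsup (fun n => Psi (t (φ (φ' n))) (f (φ (φ' n))) μ) atTop :=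
        limsup_le_limsup (.of_forall fun _ => (hPsi _).le)
    _ ≤ Psi θ ψ μ := h.limsup_Psi_le (fun _ => hf _) hψ (fun _ => hfA _)
        (hθ.comp hφ'.tendsto_atTop)

end Supremum

/-- Under Condition A, `L(F) = sup_{θ, ψ ∈ SC₀} Ψ(θ, ψ, F)` is finite
and the supremum is attained at some `(θ*(F), ψ*(F)) ∈ ℝ × SC₀`. -/
theorem statement1 (μ : Measure ℝ) (hA : CondA μ) :
    (Lsup μ ≠ ⊤ ∧ Lsup μ ≠ ⊥) ∧
      ∃ (θ : ℝ) (ψ : ℝ → EReal), memSC0 ψ ∧ Psi θ ψ μ = Lsup μ := by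
  obtain ⟨hprob, hdirac, hmoment⟩ := hA
  have hbot : ⊥ < Lsup μ := bot_lt_Lsup hmoment
  obtain ⟨θ, ψ, hψ, hmax⟩ := exists_Psi_eq_Lsup hdirac hbot
  have htop : Lsup μ < ⊤ := hmax ▸ (Psi_le_apply_zero hψ).trans_lt (hψ.1 0)
  exact ⟨⟨htop.ne, hbot.ne'⟩, θ, ψ, hψ, hmax⟩
end

section
/- Let 𝔽 be the distribution function of the point mass δ_{x₀} at some x₀ ∈ ℝ. Then sup_{ψ ∈ SC₀} Ψ(x₀, ψ, 𝔽) = +∞; in particular sup_{θ ∈ ℝ, ψ ∈ SC₀} Ψ(θ, ψ, 𝔽) = +∞, while Ψ(θ, ψ, 𝔽) < ∞ for every θ ∈ ℝ and every ψ ∈ SC₀, so the supremum is not attained (no maximum likelihood estimator exists for degenerate data). -/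
open MeasureTheory Filter Set
open scoped ENNReal NNReal

/-! A point mass at `x₀` only sees the single value `ψ (x₀ - θ)`, whereas `∫ e^ψ` ignores Lebesgue
null sets. The function with value `c` at `0` and `-∞` elsewhere belongs to `SC₀`, pays no penalty
and gives `Ψ` at `θ = x₀` the value `c`, for `c` as large as we please; yet for a fixed `ψ ∈ SC₀`
the value `ψ (x₀ - θ) < ∞` bounds `Ψ`. -/

section Plateau

variable {α : Type*} {S : Set α} {x : α}

open scoped Classical in
/-- The function equal to `c` on `S` and to `-∞` off `S`: the concave indicator function of
`S`, shifted by `c`. For `S = {0}` it is a member of `SC₀` that costs nothing in `Ψ`. -/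
noncomputable def plateau (S : Set α) (c : EReal) : α → EReal :=
  fun x => if x ∈ S then c else ⊥

theorem plateau_of_mem (c : EReal) (hx : x ∈ S) : plateau S c x = c :=
  if_pos hx

theorem plateau_of_notMem (c : EReal) (hx : x ∉ S) : plateau S c x = ⊥ :=
  if_neg hx

theorem plateau_le (S : Set α) (c : EReal) (x : α) : plateau S c x ≤ c := by
  by_cases hx : x ∈ S
  · exact (plateau_of_mem c hx).le
  · exact (plateau_of_notMem c hx).trans_le bot_le

theorem upperSemicontinuous_plateau [TopologicalSpace α] (hS : IsClosed S) (c : EReal) :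
    UpperSemicontinuous (plateau S c) := by
  intro x y hxy
  by_cases hx : x ∈ S
  · rw [plateau_of_mem c hx] at hxy
    exact .of_forall fun z => (plateau_le S c z).trans_lt hxy
  · rw [plateau_of_notMem c hx] at hxy
    filter_upwards [hS.isOpen_compl.mem_nhds hx] with z hz
    rwa [plateau_of_notMem c hz]

theorem lintegral_expE_plateau [MeasurableSpace α] (μ : Measure α) (hS : MeasurableSet S)
    (c : EReal) : ∫⁻ x, expE (plateau S c x) ∂μ = expE c * μ S := by
  have hind : (fun x => expE (plateau S c x)) = S.indicator fun _ => expE c := by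
    ext x
    by_cases hx : x ∈ S
    · rw [plateau_of_mem c hx, indicator_of_mem hx]
    · rw [plateau_of_notMem c hx, indicator_of_notMem hx, expE, if_pos rfl]
  rw [hind, lintegral_indicator_const hS]

end Plateau

theorem eConcave_plateau {S : Set ℝ} (hS : Convex ℝ S) (c : EReal) : EConcave (plateau S c) := by
  intro x y t ht₀ ht₁
  rcases ht₀.eq_or_lt with rfl | ht₀
  · simp
  rcases ht₁.eq_or_lt with rfl | ht₁
  · simp
  have hs : 0 < 1 - t := sub_pos.2 ht₁
  by_cases hx : x ∈ S
  · by_cases hy : y ∈ S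
    · have hmem : t * x + (1 - t) * y ∈ S := hS hx hy ht₀.le hs.le (add_sub_cancel t 1)
      rw [plateau_of_mem c hx, plateau_of_mem c hy, plateau_of_mem c hmem,
        ← EReal.right_distrib_of_nonneg (EReal.coe_nonneg.2 ht₀.le) (EReal.coe_nonneg.2 hs.le),
        ← EReal.coe_add, add_sub_cancel, EReal.coe_one, one_mul]
    · rw [plateau_of_notMem c hy, EReal.coe_mul_bot_of_pos hs, EReal.add_bot]
      exact bot_le
  · rw [plateau_of_notMem c hx, EReal.coe_mul_bot_of_pos ht₀, EReal.bot_add]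
    exact bot_le

theorem memSC0_plateau {S : Set ℝ} (hne : S.Nonempty) (hclosed : IsClosed S) (hconv : Convex ℝ S)
    (hsymm : ∀ x, -x ∈ S ↔ x ∈ S) (c : ℝ) : memSC0 (plateau S c) := by
  obtain ⟨a, ha⟩ := hne
  refine ⟨fun x => (plateau_le S c x).trans_lt (EReal.coe_lt_top c), ⟨a, ?_⟩,
    upperSemicontinuous_plateau hclosed c, eConcave_plateau hconv c, fun x => ?_⟩
  · rw [plateau_of_mem _ ha]
    exact EReal.coe_ne_bot c
  · by_cases hx : x ∈ S
    · rw [plateau_of_mem _ hx, plateau_of_mem _ ((hsymm x).2 hx)]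
    · rw [plateau_of_notMem _ hx, plateau_of_notMem _ (mt (hsymm x).1 hx)]

theorem coe_toENN_sub_coe_toENN_neg (y : EReal) : (toENN y : EReal) - (toENN (-y) : EReal) = y := by
  -- `toENN` unfolds to `EReal.toENNReal`.
  have hmax (z : EReal) : (toENN z : EReal) = max 0 z := EReal.coe_toENNReal_eq_max
  rw [hmax, hmax]
  rcases le_total 0 y with hy | hy
  · rw [max_eq_right hy, max_eq_left (EReal.neg_le_zero.2 hy), sub_zero]
  · rw [max_eq_left hy, max_eq_right (EReal.neg_nonneg.2 hy), zero_sub, neg_neg]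

theorem eIntegral_dirac (a : ℝ) (ψ : ℝ → EReal) : eIntegral (Measure.dirac a) ψ = ψ a := by
  rw [eIntegral, lintegral_dirac, lintegral_dirac, coe_toENN_sub_coe_toENN_neg]

theorem Psi_le_eIntegral (θ : ℝ) (ψ : ℝ → EReal) (μ : Measure ℝ) :
    Psi θ ψ μ ≤ eIntegral μ fun x => ψ (x - θ) :=
  EReal.sub_le_of_le_add (le_add_of_nonneg_right (EReal.coe_ennreal_nonneg _))

theorem Psi_dirac_le (x₀ θ : ℝ) (ψ : ℝ → EReal) : Psi θ ψ (Measure.dirac x₀) ≤ ψ (x₀ - θ) :=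
  (Psi_le_eIntegral θ ψ _).trans_eq (eIntegral_dirac _ _)

theorem Psi_plateau_dirac {S : Set ℝ} (hS : MeasurableSet S) {x₀ θ : ℝ} (hmem : x₀ - θ ∈ S)
    (c : EReal) : Psi θ (plateau S c) (Measure.dirac x₀) = c - (expE c * volume S : ℝ≥0∞) := by
  rw [Psi, eIntegral_dirac, plateau_of_mem c hmem, lintegral_expE_plateau _ hS]

theorem Psi_le_Ltheta (θ : ℝ) {ψ : ℝ → EReal} (hψ : memSC0 ψ) (μ : Measure ℝ) :
    Psi θ ψ μ ≤ Ltheta θ μ :=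
  le_iSup₂_of_le ψ hψ le_rfl

theorem Ltheta_le_Lsup (θ : ℝ) (μ : Measure ℝ) : Ltheta θ μ ≤ Lsup μ :=
  le_iSup (fun θ => Ltheta θ μ) θ

theorem coe_le_Ltheta_dirac_self (x₀ c : ℝ) : (c : EReal) ≤ Ltheta x₀ (Measure.dirac x₀) := by
  have hmem : memSC0 (plateau {0} c) :=
    memSC0_plateau (singleton_nonempty 0) isClosed_singleton (convex_singleton 0) (by simp) c
  have hPsi : Psi x₀ (plateau {0} c) (Measure.dirac x₀) = c := by
    rw [Psi_plateau_dirac (measurableSet_singleton 0) (sub_self x₀), Real.volume_singleton,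
      mul_zero, EReal.coe_ennreal_zero, sub_zero]
  exact hPsi.ge.trans (Psi_le_Ltheta x₀ hmem _)

theorem Ltheta_dirac_self (x₀ : ℝ) : Ltheta x₀ (Measure.dirac x₀) = ⊤ :=
  (EReal.eq_top_iff_forall_lt _).2 fun c =>
    (EReal.coe_lt_coe (lt_add_one c)).trans_le (coe_le_Ltheta_dirac_self x₀ (c + 1))

/-- For the point mass at `x₀`, `sup_{ψ ∈ SC₀} Ψ(x₀, ψ, 𝔽) = +∞`, hence
`sup_{θ, ψ} Ψ(θ, ψ, 𝔽) = +∞`, while `Ψ(θ, ψ, 𝔽) < ∞` for each fixed `θ, ψ ∈ SC₀`;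
so no maximizer exists. -/
theorem statement3 (x₀ : ℝ) :
    Ltheta x₀ (Measure.dirac x₀) = ⊤ ∧
      Lsup (Measure.dirac x₀) = ⊤ ∧
      (∀ (θ : ℝ) (ψ : ℝ → EReal), memSC0 ψ → Psi θ ψ (Measure.dirac x₀) < ⊤) ∧
      ¬∃ (θ : ℝ) (ψ : ℝ → EReal), memSC0 ψ ∧
        Psi θ ψ (Measure.dirac x₀) = Lsup (Measure.dirac x₀) := by
  have hLsup : Lsup (Measure.dirac x₀) = ⊤ :=
    top_le_iff.1 ((Ltheta_dirac_self x₀).ge.trans (Ltheta_le_Lsup x₀ _))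
  have hlt (θ : ℝ) (ψ : ℝ → EReal) (hψ : memSC0 ψ) : Psi θ ψ (Measure.dirac x₀) < ⊤ :=
    (Psi_dirac_le x₀ θ ψ).trans_lt (hψ.1 _)
  refine ⟨Ltheta_dirac_self x₀, hLsup, hlt, ?_⟩
  rintro ⟨θ, ψ, hψ, hmax⟩
  exact (hlt θ ψ hψ).ne (hmax.trans hLsup)
end
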